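/- Let T > 0, 0 < α < 1, 0 < λ < 1 and ω ∈ A_1^+, and let f be an integrable function on (0,T). The Abel equation I^α_{0+}φ(x) = f(x) for a.e. x ∈ (0,T) has a solution φ with ‖φ‖_{L^{1,λ}_+((0,T),ω)} < ∞ if and only if there exists a function g with ‖g‖_{L^{1,λ}_+((0,T),ω)} < ∞ such that f_{1−α}(x) = ∫_0^x g(t) dt for all x ∈ [0,T] (equivalently: f_{1−α} is absolutely continuous on [0,T], f_{1−α}(0) = 0, and its a.e.-derivative lies in L^{1,λ}_+((0,T),ω)). When these conditions hold, the solution is unique up to a.e. equality and φ = g a.e. on (0,T), i.e. φ(x) = (d/dx) (Γ(1−α)^{−1} ∫_0^x f(t)(x−t)^{−α} dt) = D^α_{0+}f(x). -/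

import Mathlib

open MeasureTheory
open scoped ENNReal

/-- The one-sided Muckenhoupt class `A_1^+`: `M⁻ω ≤ C·ω` a.e. -/
def MemA1Plus (ω : ℝ → ℝ) : Prop :=
  ∃ C > (0:ℝ), ∀ᵐ x ∂(volume : Measure ℝ), ∀ h > (0:ℝ),
    (∫ y in (x - h)..x, ω y) ≤ C * h * ω x

/-- `Φ⁺_{ω,λ,θ}(x0,h) = h^{λ−1} ∫_{x0−h}^{x0} ω^θ`. -/
noncomputable def Phi (ω : ℝ → ℝ) (lam θ x0 h : ℝ) : ℝ :=
  h ^ (lam - 1) * ∫ y in (x0 - h)..x0, (ω y) ^ θ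

/-- The local one-sided weighted Morrey norm `‖f‖_{L^{p,λ}_+((0,T),ω^θ)}`. -/
noncomputable def morreyLocal (T : ℝ) (ω : ℝ → ℝ) (p lam θ : ℝ) (f : ℝ → ℝ) : ℝ≥0∞ :=
  ⨆ x0 ∈ Set.Icc (0:ℝ) T, ⨆ h ∈ Set.Ioc (0:ℝ) T,
    ((∫⁻ y in Set.Ioo x0 (x0 + h) ∩ Set.Ioo 0 T, ENNReal.ofReal (|f y| ^ p)) /
      ENNReal.ofReal (Phi ω lam θ x0 h)) ^ (1 / p)

/-- The Riemann–Liouville integral of order `α`. -/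
noncomputable def riemannLiouville (α : ℝ) (φ : ℝ → ℝ) (x : ℝ) : ℝ :=
  (Real.Gamma α)⁻¹ * ∫ t in (0:ℝ)..x, φ t * (x - t) ^ (α - 1)

/-- `f_{1−α}(x) = I^{1−α}_{0+}f(x) = Γ(1−α)⁻¹ ∫_0^x f(t)(x−t)^{−α} dt`. -/
noncomputable def fracInt (α : ℝ) (f : ℝ → ℝ) (x : ℝ) : ℝ :=
  (Real.Gamma (1 - α))⁻¹ * ∫ t in (0:ℝ)..x, f t * (x - t) ^ (-α)

/-!
By Fubini's theorem and the Beta integral, the fractional integrals satisfy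
`I^b (I^a φ) = I^(a + b) φ` for integrable `φ` and `1 ≤ a + b`. Applying `I^(1-α)` to the Abel
equation `I^α φ = f` therefore gives `I^(1-α) f = I^1 φ`. Conversely, if `I^(1-α) f = I^1 g`, then
`I^(1-α) f = I^(1-α) (I^α g)`, and `I^(1-α)` is injective on integrable functions: apply `I^α` to
reach `I^1`, then use Lebesgue differentiation. A function of finite Morrey norm is integrable on
`(0, T)`, being controlled by the term `x0 = 0`, `h = T` of the supremum.
-/

section RiemannLiouville

open Set

variable {a b x T : ℝ} {f φ ψ : ℝ → ℝ}

theorem integral_rpow_mul_sub_rpow (ha : 0 < a) (hb : 0 < b) (hx : 0 < x) :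
    ∫ t in (0:ℝ)..x, t ^ (a - 1) * (x - t) ^ (b - 1) =
      x ^ (a + b - 1) * ProbabilityTheory.beta a b := by
  have hcast : ∫ t in (0:ℝ)..x, (t : ℂ) ^ ((a : ℂ) - 1) * ((x : ℂ) - t) ^ ((b : ℂ) - 1) =
      ∫ t in (0:ℝ)..x, ((t ^ (a - 1) * (x - t) ^ (b - 1) : ℝ) : ℂ) := by
    refine intervalIntegral.integral_congr fun t ht => ?_
    rw [uIcc_of_le hx.le] at ht
    push_cast [Complex.ofReal_cpow ht.1, Complex.ofReal_cpow (sub_nonneg.2 ht.2)]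
    rfl
  have hscaled := Complex.betaIntegral_scaled a b hx
  rw [hcast, intervalIntegral.integral_ofReal] at hscaled
  rw [ProbabilityTheory.beta_eq_betaIntegralReal a b ha hb, ← Complex.re_ofReal_mul,
    Complex.ofReal_cpow hx.le]
  push_cast
  rw [← hscaled, Complex.ofReal_re]

/-- The Riemann–Liouville kernel `s₊ ^ (a - 1) / Γ(a)`, whose convolution with `φ` is the
fractional integral of `φ` of order `a`. It is `0` for `s ≤ 0`, so that `φ s * rlKernel a (x - s)`
vanishes for `x ≤ s` and integrals over `(0, x)` may be taken over any larger interval. -/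
noncomputable def rlKernel (a : ℝ) : ℝ → ℝ :=
  (Ioi 0).indicator fun s => s ^ (a - 1) / Real.Gamma a

theorem rlKernel_of_pos (hx : 0 < x) : rlKernel a x = x ^ (a - 1) / Real.Gamma a :=
  indicator_of_mem (mem_Ioi.2 hx) _

theorem rlKernel_of_nonpos (hx : x ≤ 0) : rlKernel a x = 0 :=
  indicator_of_notMem (notMem_Ioi.2 hx) _

theorem rlKernel_pos (ha : 0 < a) (hx : 0 < x) : 0 < rlKernel a x := by
  rw [rlKernel_of_pos hx]
  have := Real.Gamma_pos_of_pos ha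
  positivity

theorem rlKernel_nonneg (ha : 0 < a) (x : ℝ) : 0 ≤ rlKernel a x := by
  rcases le_or_gt x 0 with hx | hx
  · exact (rlKernel_of_nonpos hx).ge
  · exact (rlKernel_pos ha hx).le

@[fun_prop]
theorem measurable_rlKernel (a : ℝ) : Measurable (rlKernel a) :=
  Measurable.indicator (by fun_prop) measurableSet_Ioi

theorem monotone_rlKernel (ha : 1 ≤ a) : Monotone (rlKernel a) := by
  intro x y hxy
  have ha₀ : 0 < a := zero_lt_one.trans_le ha
  rcases le_or_gt x 0 with hx | hx
  · exact (rlKernel_of_nonpos hx).trans_le (rlKernel_nonneg ha₀ y)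
  · rw [rlKernel_of_pos hx, rlKernel_of_pos (hx.trans_le hxy)]
    have := Real.Gamma_pos_of_pos ha₀
    gcongr

theorem integral_rlKernel_mul_rlKernel_sub (ha : 0 < a) (hb : 0 < b) (x : ℝ) :
    ∫ t, rlKernel a t * rlKernel b (x - t) = rlKernel (a + b) x := by
  have hconv := congr_fun (posConvolution_eq_convolution_indicator
    (fun t => t ^ (a - 1) / Real.Gamma a) (fun t => t ^ (b - 1) / Real.Gamma b)
    (ContinuousLinearMap.mul ℝ ℝ)) x
  refine hconv.symm.trans ?_
  rcases le_or_gt x 0 with hx | hx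
  · rw [rlKernel_of_nonpos hx, posConvolution, indicator_of_notMem (notMem_Ioi.2 hx)]
  · rw [rlKernel_of_pos hx, posConvolution, indicator_of_mem (mem_Ioi.2 hx)]
    have ha' := (Real.Gamma_pos_of_pos ha).ne'
    have hb' := (Real.Gamma_pos_of_pos hb).ne'
    simp only [ContinuousLinearMap.mul_apply', div_mul_div_comm, intervalIntegral.integral_div,
      integral_rpow_mul_sub_rpow ha hb hx, ProbabilityTheory.beta]
    field_simp

theorem setIntegral_Ioc_rlKernel_mul_rlKernel (ha : 0 < a) (hb : 0 < b) {s : ℝ} (hs : 0 ≤ s)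
    (x : ℝ) :
    ∫ t in Ioc 0 x, rlKernel a (t - s) * rlKernel b (x - t) = rlKernel (a + b) (x - s) := by
  rw [setIntegral_eq_integral_of_forall_compl_eq_zero,
    ← integral_rlKernel_mul_rlKernel_sub ha hb (x - s),
    ← integral_sub_right_eq_self (fun t => rlKernel a t * rlKernel b (x - s - t)) s]
  · simp only [sub_sub_sub_cancel_right]
  · intro t ht
    rcases le_or_gt t 0 with h0 | h0
    · rw [rlKernel_of_nonpos (by linarith), zero_mul]
    · rw [rlKernel_of_nonpos (a := b) (sub_nonpos.2 (not_le.1 fun h => ht ⟨h0, h⟩).le), mul_zero]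

theorem integrableOn_Ioc_rlKernel_mul_rlKernel (ha : 0 < a) (hb : 0 < b) {s : ℝ} (hs : 0 ≤ s)
    (x : ℝ) :
    IntegrableOn (fun t => rlKernel a (t - s) * rlKernel b (x - t)) (Ioc 0 x) := by
  rcases lt_or_ge s x with h | h
  · refine .of_integral_ne_zero ?_
    rw [setIntegral_Ioc_rlKernel_mul_rlKernel ha hb hs]
    exact (rlKernel_pos (add_pos ha hb) (sub_pos.2 h)).ne'
  · refine integrableOn_zero.congr_fun (fun t ht => ?_) measurableSet_Ioc
    rw [rlKernel_of_nonpos (by linarith [ht.2]), zero_mul]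

theorem integrableOn_mul_rlKernel_sub (ha : 1 ≤ a) (hφ : IntegrableOn φ (Ioc 0 x)) :
    IntegrableOn (fun s => φ s * rlKernel a (x - s)) (Ioc 0 x) := by
  refine Integrable.mul_bdd (c := rlKernel a x) hφ
    (Measurable.aestronglyMeasurable (by fun_prop)) ?_
  filter_upwards [ae_restrict_mem measurableSet_Ioc] with s hs
  rw [Real.norm_of_nonneg (rlKernel_nonneg (by linarith) _)]
  exact monotone_rlKernel ha (by linarith [hs.1])

theorem integrable_prod_mul_rlKernel_mul_rlKernel (ha : 0 < a) (hb : 0 < b) (hab : 1 ≤ a + b)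
    (hφ : IntegrableOn φ (Ioc 0 x)) :
    Integrable (fun p : ℝ × ℝ => φ p.2 * rlKernel a (p.1 - p.2) * rlKernel b (x - p.1))
      ((volume.restrict (Ioc 0 x)).prod (volume.restrict (Ioc 0 x))) := by
  have hmeas : AEStronglyMeasurable
      (fun p : ℝ × ℝ => φ p.2 * rlKernel a (p.1 - p.2) * rlKernel b (x - p.1))
      ((volume.restrict (Ioc 0 x)).prod (volume.restrict (Ioc 0 x))) :=
    (hφ.aestronglyMeasurable.comp_snd.mul (Measurable.aestronglyMeasurable (by fun_prop))).mul
      (Measurable.aestronglyMeasurable (by fun_prop))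
  refine (integrable_prod_iff' hmeas).2 ⟨?_, ?_⟩
  · filter_upwards [ae_restrict_mem measurableSet_Ioc] with s hs
    simp only [mul_assoc]
    exact (integrableOn_Ioc_rlKernel_mul_rlKernel ha hb hs.1.le x).const_mul _
  · refine (integrableOn_mul_rlKernel_sub hab hφ.norm).congr_fun (fun s hs => ?_) measurableSet_Ioc
    simp only [norm_mul, Real.norm_of_nonneg (rlKernel_nonneg ha _),
      Real.norm_of_nonneg (rlKernel_nonneg hb _), mul_assoc, integral_const_mul,
      setIntegral_Ioc_rlKernel_mul_rlKernel ha hb hs.1.le]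

theorem riemannLiouville_eq_setIntegral_rlKernel (a : ℝ) (φ : ℝ → ℝ) {t : ℝ}
    (ht : t ∈ Icc 0 x) :
    riemannLiouville a φ t = ∫ s in Ioc 0 x, φ s * rlKernel a (t - s) := by
  have hsub : Ioo 0 t ⊆ Ioc 0 x := fun s hs => ⟨hs.1, hs.2.le.trans ht.2⟩
  have hzero : ∀ s ∈ Ioc 0 x \ Ioo 0 t, φ s * rlKernel a (t - s) = 0 := by
    rintro s ⟨hs, hs'⟩
    rw [rlKernel_of_nonpos (sub_nonpos.2 (not_lt.1 fun h => hs' ⟨hs.1, h⟩)), mul_zero]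
  rw [setIntegral_eq_of_subset_of_forall_sdiff_eq_zero measurableSet_Ioc hsub hzero,
    riemannLiouville, intervalIntegral.integral_of_le ht.1, integral_Ioc_eq_integral_Ioo,
    ← integral_const_mul]
  refine setIntegral_congr_fun measurableSet_Ioo fun s hs => ?_
  rw [rlKernel_of_pos (sub_pos.2 hs.2)]
  ring

theorem riemannLiouville_congr_ae (hx : 0 ≤ x) (h : φ =ᵐ[volume.restrict (Ioo 0 x)] ψ) :
    riemannLiouville a φ x = riemannLiouville a ψ x := by
  simp only [riemannLiouville, intervalIntegral.integral_of_le hx, integral_Ioc_eq_integral_Ioo]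
  congr 1
  refine integral_congr_ae ?_
  filter_upwards [h] with t ht
  rw [ht]

theorem riemannLiouville_one (φ : ℝ → ℝ) (x : ℝ) :
    riemannLiouville 1 φ x = ∫ t in (0:ℝ)..x, φ t := by
  simp [riemannLiouville]

theorem fracInt_eq_riemannLiouville (a : ℝ) : fracInt a = riemannLiouville (1 - a) := by
  ext f x
  simp only [fracInt, riemannLiouville, sub_sub_cancel_left]

theorem riemannLiouville_riemannLiouville (ha : 0 < a) (hb : 0 < b) (hab : 1 ≤ a + b)
    (hx : 0 ≤ x) (hφ : IntegrableOn φ (Ioo 0 x)) :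
    riemannLiouville b (riemannLiouville a φ) x = riemannLiouville (a + b) φ x := by
  rw [← integrableOn_Ioc_iff_integrableOn_Ioo] at hφ
  have hx' : x ∈ Icc 0 x := ⟨hx, le_rfl⟩
  calc riemannLiouville b (riemannLiouville a φ) x
      = ∫ t in Ioc 0 x, ∫ s in Ioc 0 x, φ s * rlKernel a (t - s) * rlKernel b (x - t) := by
        rw [riemannLiouville_eq_setIntegral_rlKernel b _ hx']
        refine setIntegral_congr_fun measurableSet_Ioc fun t ht => ?_
        rw [riemannLiouville_eq_setIntegral_rlKernel a φ (Ioc_subset_Icc_self ht),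
          integral_mul_const]
    _ = ∫ s in Ioc 0 x, ∫ t in Ioc 0 x, φ s * rlKernel a (t - s) * rlKernel b (x - t) :=
        integral_integral_swap (integrable_prod_mul_rlKernel_mul_rlKernel ha hb hab hφ)
    _ = ∫ s in Ioc 0 x, φ s * rlKernel (a + b) (x - s) := by
        refine setIntegral_congr_fun measurableSet_Ioc fun s hs => ?_
        simp only [mul_assoc, integral_const_mul,
          setIntegral_Ioc_rlKernel_mul_rlKernel ha hb hs.1.le]
    _ = riemannLiouville (a + b) φ x := (riemannLiouville_eq_setIntegral_rlKernel _ φ hx').symm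

theorem fracInt_riemannLiouville (ha₀ : 0 < a) (ha₁ : a < 1) (hx : 0 ≤ x)
    (hφ : IntegrableOn φ (Ioo 0 x)) :
    fracInt a (riemannLiouville a φ) x = ∫ t in (0:ℝ)..x, φ t := by
  rw [fracInt_eq_riemannLiouville,
    riemannLiouville_riemannLiouville ha₀ (sub_pos.2 ha₁) (by linarith) hx hφ, add_sub_cancel,
    riemannLiouville_one]

theorem integrableOn_riemannLiouville (ha : 0 < a) (hφ : IntegrableOn φ (Ioo 0 T)) :
    IntegrableOn (riemannLiouville a φ) (Ioo 0 T) := by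
  rw [← integrableOn_Ioc_iff_integrableOn_Ioo] at hφ
  -- Integrating `riemannLiouville a φ` over `(0, T)` is applying the operator of order `1`.
  have hprod := (integrable_prod_mul_rlKernel_mul_rlKernel ha one_pos (by linarith)
    hφ).integral_prod_left
  refine (IntegrableOn.mono_set hprod Ioo_subset_Ioc_self).congr_fun (fun t ht => ?_)
    measurableSet_Ioo
  simp [riemannLiouville_eq_setIntegral_rlKernel a φ (Ioo_subset_Icc_self ht),
    rlKernel_of_pos (sub_pos.2 ht.2)]

theorem ae_eq_of_forall_intervalIntegral_eq {E : Type*} [NormedAddCommGroup E] [NormedSpace ℝ E]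
    [CompleteSpace E] {u v : ℝ → E} (hu : IntervalIntegrable u volume a b)
    (hv : IntervalIntegrable v volume a b)
    (h : ∀ x ∈ Ioo a b, ∫ t in a..x, u t = ∫ t in a..x, v t) :
    u =ᵐ[volume.restrict (Ioo a b)] v := by
  rw [Filter.EventuallyEq, ae_restrict_iff' measurableSet_Ioo]
  filter_upwards [hu.ae_hasDerivAt_integral, hv.ae_hasDerivAt_integral] with x hux hvx hx
  have hx' : x ∈ uIcc a b := Icc_subset_uIcc (Ioo_subset_Icc_self hx)
  refine (hux hx' a left_mem_uIcc).unique <|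
    (hvx hx' a left_mem_uIcc).congr_of_eventuallyEq ?_
  filter_upwards [isOpen_Ioo.mem_nhds hx] using h

theorem ae_eq_of_forall_riemannLiouville_eq (ha₀ : 0 < a) (ha₁ : a < 1) (hT : 0 ≤ T)
    (hφ : IntegrableOn φ (Ioo 0 T)) (hψ : IntegrableOn ψ (Ioo 0 T))
    (h : ∀ x ∈ Ioo 0 T, riemannLiouville a φ x = riemannLiouville a ψ x) :
    φ =ᵐ[volume.restrict (Ioo 0 T)] ψ := by
  refine ae_eq_of_forall_intervalIntegral_eq
    ((intervalIntegrable_iff_integrableOn_Ioo_of_le hT).2 hφ)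
    ((intervalIntegrable_iff_integrableOn_Ioo_of_le hT).2 hψ) fun x hx => ?_
  have hsub : Ioo 0 x ⊆ Ioo 0 T := Ioo_subset_Ioo_right hx.2.le
  rw [← fracInt_riemannLiouville ha₀ ha₁ hx.1.le (hφ.mono_set hsub),
    ← fracInt_riemannLiouville ha₀ ha₁ hx.1.le (hψ.mono_set hsub), fracInt_eq_riemannLiouville]
  refine riemannLiouville_congr_ae hx.1.le ?_
  filter_upwards [ae_restrict_mem measurableSet_Ioo] with t ht using h t (hsub ht)

theorem riemannLiouville_ae_eq_iff_fracInt_eq_integral (ha₀ : 0 < a) (ha₁ : a < 1) (hT : 0 ≤ T)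
    (hφ : IntegrableOn φ (Ioo 0 T)) (hf : IntegrableOn f (Ioo 0 T)) :
    riemannLiouville a φ =ᵐ[volume.restrict (Ioo 0 T)] f ↔
      ∀ x ∈ Icc 0 T, fracInt a f x = ∫ t in (0:ℝ)..x, φ t := by
  have hprim : ∀ x ∈ Icc 0 T, fracInt a (riemannLiouville a φ) x = ∫ t in (0:ℝ)..x, φ t :=
    fun x hx => fracInt_riemannLiouville ha₀ ha₁ hx.1
      (hφ.mono_set (Ioo_subset_Ioo_right hx.2))
  constructor
  · intro h x hx
    rw [← hprim x hx, fracInt_eq_riemannLiouville]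
    exact riemannLiouville_congr_ae hx.1
      (ae_restrict_of_ae_restrict_of_subset (Ioo_subset_Ioo_right hx.2) h.symm)
  · intro h
    refine ae_eq_of_forall_riemannLiouville_eq (sub_pos.2 ha₁) (sub_lt_self 1 ha₀) hT
      (integrableOn_riemannLiouville ha₀ hφ) hf fun x hx => ?_
    have hx' := Ioo_subset_Icc_self hx
    rw [← fracInt_eq_riemannLiouville, hprim x hx', h x hx']

theorem memLp_of_morreyLocal_lt_top {p lam θ : ℝ} {ω : ℝ → ℝ} (hT : 0 < T) (hp : 0 < p)
    (hφ : AEStronglyMeasurable φ (volume.restrict (Ioo 0 T)))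
    (h : morreyLocal T ω p lam θ φ < ⊤) :
    MemLp φ (ENNReal.ofReal p) (volume.restrict (Ioo 0 T)) := by
  have hle : ((∫⁻ y in Ioo 0 (0 + T) ∩ Ioo 0 T, ENNReal.ofReal (|φ y| ^ p)) /
      ENNReal.ofReal (Phi ω lam θ 0 T)) ^ (1 / p) ≤ morreyLocal T ω p lam θ φ :=
    le_iSup₂_of_le 0 ⟨le_rfl, hT.le⟩ (le_iSup₂_of_le T ⟨hT, le_rfl⟩ le_rfl)
  have hquot := (ENNReal.rpow_lt_top_iff_of_pos (one_div_pos.2 hp)).1 (hle.trans_lt h)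
  rw [zero_add, inter_self] at hquot
  have hint : ∫⁻ y in Ioo 0 T, ENNReal.ofReal (|φ y| ^ p) < ⊤ := by
    contrapose! hquot
    rw [top_le_iff.1 hquot, ENNReal.top_div_of_ne_top ENNReal.ofReal_ne_top]
  refine ⟨hφ, (eLpNorm_lt_top_iff_lintegral_rpow_enorm_lt_top (by simpa using hp)
    ENNReal.ofReal_ne_top).2 ?_⟩
  simpa only [ENNReal.toReal_ofReal hp.le, Real.enorm_eq_ofReal_abs,
    ENNReal.ofReal_rpow_of_nonneg (abs_nonneg _) hp.le] using hint

theorem integrableOn_of_morreyLocal_lt_top {p lam θ : ℝ} {ω : ℝ → ℝ} (hT : 0 < T) (hp : 1 ≤ p)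
    (hφ : AEStronglyMeasurable φ (volume.restrict (Ioo 0 T)))
    (h : morreyLocal T ω p lam θ φ < ⊤) : IntegrableOn φ (Ioo 0 T) :=
  (memLp_of_morreyLocal_lt_top hT (by linarith) hφ h).integrable (by simpa using hp)

theorem abel_equation_solvable_morrey_general (ha₀ : 0 < a) (ha₁ : a < 1) (hT : 0 ≤ T)
    (X : Set (ℝ → ℝ)) (hX : ∀ φ ∈ X, IntegrableOn φ (Ioo 0 T)) (hf : IntegrableOn f (Ioo 0 T)) :
    ((∃ φ ∈ X, ∀ᵐ x ∂volume.restrict (Ioo 0 T), riemannLiouville a φ x = f x) ↔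
      ∃ g ∈ X, ∀ x ∈ Icc 0 T, fracInt a f x = ∫ t in (0:ℝ)..x, g t) ∧
    ∀ φ g : ℝ → ℝ,
      φ ∈ X → (∀ᵐ x ∂volume.restrict (Ioo 0 T), riemannLiouville a φ x = f x) →
      g ∈ X → (∀ x ∈ Icc 0 T, fracInt a f x = ∫ t in (0:ℝ)..x, g t) →
      φ =ᵐ[volume.restrict (Ioo 0 T)] g := by
  have hiff : ∀ φ ∈ X, (∀ᵐ x ∂volume.restrict (Ioo 0 T), riemannLiouville a φ x = f x) ↔
      ∀ x ∈ Icc 0 T, fracInt a f x = ∫ t in (0:ℝ)..x, φ t := fun φ hφ =>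
    riemannLiouville_ae_eq_iff_fracInt_eq_integral ha₀ ha₁ hT (hX φ hφ) hf
  refine ⟨exists_congr fun φ => and_congr_right (hiff φ), fun φ g hφ hsol hg hprim => ?_⟩
  refine ae_eq_of_forall_intervalIntegral_eq
    ((intervalIntegrable_iff_integrableOn_Ioo_of_le hT).2 (hX φ hφ))
    ((intervalIntegrable_iff_integrableOn_Ioo_of_le hT).2 (hX g hg)) fun x hx => ?_
  have hx' := Ioo_subset_Icc_self hx
  rw [← (hiff φ hφ).1 hsol x hx', hprim x hx']

end RiemannLiouville

/-- Solvability of the Abel equation `I^α_{0+}φ = f` in `L^{1,λ}_+((0,T),ω)`: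
it is solvable iff `f_{1−α}` is a primitive of a function `g` of finite
`L^{1,λ}_+((0,T),ω)` norm with `f_{1−α}(0) = 0`, and then the solution is
unique with `φ = g = D^α_{0+}f` a.e. on `(0,T)`. -/
theorem abel_equation_solvable_morrey (T α lam : ℝ) (hT : 0 < T)
    (hα0 : 0 < α) (hα1 : α < 1) (hlam0 : 0 < lam) (hlam1 : lam < 1)
    (ω : ℝ → ℝ) (hpos : ∀ x, 0 < ω x) (hloc : LocallyIntegrable ω volume)
    (hA : MemA1Plus ω)
    (f : ℝ → ℝ) (hf : IntegrableOn f (Set.Ioo 0 T)) :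
    ((∃ φ : ℝ → ℝ, Measurable φ ∧ morreyLocal T ω 1 lam 1 φ < ⊤ ∧
        ∀ᵐ x ∂(volume.restrict (Set.Ioo 0 T)), riemannLiouville α φ x = f x) ↔
      (∃ g : ℝ → ℝ, Measurable g ∧ morreyLocal T ω 1 lam 1 g < ⊤ ∧
        ∀ x ∈ Set.Icc (0:ℝ) T, fracInt α f x = ∫ t in (0:ℝ)..x, g t)) ∧
    (∀ φ g : ℝ → ℝ,
      Measurable φ → morreyLocal T ω 1 lam 1 φ < ⊤ →
      (∀ᵐ x ∂(volume.restrict (Set.Ioo 0 T)), riemannLiouville α φ x = f x) →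
      Measurable g → morreyLocal T ω 1 lam 1 g < ⊤ →
      (∀ x ∈ Set.Icc (0:ℝ) T, fracInt α f x = ∫ t in (0:ℝ)..x, g t) →
      φ =ᵐ[volume.restrict (Set.Ioo 0 T)] g) := by
  simpa only [Set.mem_ofPred_eq, and_assoc, and_imp] using
    abel_equation_solvable_morrey_general hα0 hα1 hT.le
      {φ : ℝ → ℝ | Measurable φ ∧ morreyLocal T ω 1 lam 1 φ < ⊤}
      (fun φ hφ => integrableOn_of_morreyLocal_lt_top hT le_rfl hφ.1.aestronglyMeasurable hφ.2) hf
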